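/- Let γ ∈ (0, 1), let φ : ℝ → ℝ be a margin-based loss with φ(α) ≥ 0 for all α, and let A ⊆ ℝ be symmetric with [−1, 1] ⊆ A. Then φ is (φ_γ, A)-calibrated if and only if both of the following hold: (i) inf_{α ∈ A, |α| ≤ γ} C_φ(α, 1/2) > inf_{α ∈ A} C_φ(α, 1/2); and (ii) for every η with 1/2 < η ≤ 1, inf_{α ∈ A, α ≤ γ} C_φ(α, η) > inf_{α ∈ A} C_φ(α, η). -/

import Mathlib

/-- Class-conditional risk of a margin-based loss `φ`:
`C_φ(α, η) = η φ(α) + (1 - η) φ(-α)`. -/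
noncomputable def ccr (φ : ℝ → ℝ) (α η : ℝ) : ℝ := η * φ α + (1 - η) * φ (-α)

/-- Minimal class-conditional risk over a set `A` of achievable prediction values. -/
noncomputable def ccrStar (φ : ℝ → ℝ) (A : Set ℝ) (η : ℝ) : ℝ :=
  sInf ((fun α => ccr φ α η) '' A)

/-- Excess class-conditional risk. -/
noncomputable def ccrExcess (φ : ℝ → ℝ) (A : Set ℝ) (α η : ℝ) : ℝ :=
  ccr φ α η - ccrStar φ A η

/-- `φ` is `(ψ, A)`-calibrated. -/
def Calibrated (φ ψ : ℝ → ℝ) (A : Set ℝ) : Prop :=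
  ∀ ε > (0:ℝ), ∃ δ > (0:ℝ), ∀ η ∈ Set.Icc (0:ℝ) 1, ∀ α ∈ A,
    ccr φ α η < ccrStar φ A η + δ → ccr ψ α η < ccrStar ψ A η + ε

/-- The `γ`-robust 0-1 loss `φ_γ(α) = 1{α ≤ γ}` (the 0-1 loss is the case `γ = 0`). -/
noncomputable def robustLoss (γ : ℝ) (α : ℝ) : ℝ := if α ≤ γ then 1 else 0

/-- Quasiconcavity of a real function on ℝ. -/
def QuasiconcaveFn (h : ℝ → ℝ) : Prop :=
  ∀ α₁ α₂ l : ℝ, 0 ≤ l → l ≤ 1 → min (h α₁) (h α₂) ≤ h (l * α₁ + (1 - l) * α₂)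

/-- `φ` is quasiconcave even if its even part `α ↦ φ(α) + φ(-α)` is quasiconcave. -/
def QuasiconcaveEven (φ : ℝ → ℝ) : Prop := QuasiconcaveFn (fun α => φ α + φ (-α))

theorem ccr_nonneg {φ : ℝ → ℝ} (hφ : ∀ α, 0 ≤ φ α) (α : ℝ) {η : ℝ}
    (hη : η ∈ Set.Icc (0:ℝ) 1) : 0 ≤ ccr φ α η :=
  add_nonneg (mul_nonneg hη.1 (hφ _)) (mul_nonneg (sub_nonneg.2 hη.2) (hφ _))

theorem ccr_neg (φ : ℝ → ℝ) (α η : ℝ) : ccr φ (-α) η = ccr φ α (1 - η) := by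
  simp only [ccr, neg_neg]
  ring

theorem ccrStar_one_sub (φ : ℝ → ℝ) {A : Set ℝ} (hsymm : ∀ α ∈ A, -α ∈ A) (η : ℝ) :
    ccrStar φ A (1 - η) = ccrStar φ A η := by
  unfold ccrStar
  congr 1
  ext y
  constructor
  · rintro ⟨α, hα, rfl⟩
    exact ⟨-α, hsymm α hα, ccr_neg φ α η⟩
  · rintro ⟨α, hα, rfl⟩
    exact ⟨-α, hsymm α hα, by simp [ccr_neg]⟩

theorem ccrStar_le {φ : ℝ → ℝ} (hφ : ∀ α, 0 ≤ φ α) {S : Set ℝ} {α η : ℝ}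
    (hη : η ∈ Set.Icc (0:ℝ) 1) (hα : α ∈ S) : ccrStar φ S η ≤ ccr φ α η := by
  refine csInf_le ⟨0, ?_⟩ ⟨α, hα, rfl⟩
  rintro _ ⟨β, -, rfl⟩
  exact ccr_nonneg hφ β hη

theorem le_ccrStar {φ : ℝ → ℝ} {S : Set ℝ} (hS : S.Nonempty) {η c : ℝ}
    (h : ∀ α ∈ S, c ≤ ccr φ α η) : c ≤ ccrStar φ S η := by
  refine le_csInf (hS.image _) ?_
  rintro _ ⟨α, hα, rfl⟩
  exact h α hα

theorem ccrStar_anti {φ : ℝ → ℝ} (hφ : ∀ α, 0 ≤ φ α) {S T : Set ℝ} (hS : S.Nonempty)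
    (hST : S ⊆ T) {η : ℝ} (hη : η ∈ Set.Icc (0:ℝ) 1) : ccrStar φ T η ≤ ccrStar φ S η :=
  le_ccrStar hS fun _ hα => ccrStar_le hφ hη (hST hα)

/-- Nonnegativity of the loss makes the minimal risk lower semicontinuous up to the endpoints. -/
theorem mul_ccrStar_le {φ : ℝ → ℝ} (hφ : ∀ α, 0 ≤ φ α) {S : Set ℝ} (hS : S.Nonempty)
    {t η η₀ : ℝ} (ht : 0 ≤ t) (hη₀ : η₀ ∈ Set.Icc (0:ℝ) 1) (h₁ : t * η₀ ≤ η)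
    (h₂ : t * (1 - η₀) ≤ 1 - η) : t * ccrStar φ S η₀ ≤ ccrStar φ S η := by
  refine le_ccrStar hS fun α hα => ?_
  calc t * ccrStar φ S η₀ ≤ t * ccr φ α η₀ := mul_le_mul_of_nonneg_left (ccrStar_le hφ hη₀ hα) ht
    _ = t * η₀ * φ α + t * (1 - η₀) * φ (-α) := by
      unfold ccr
      ring
    _ ≤ ccr φ α η := add_le_add (mul_le_mul_of_nonneg_right h₁ (hφ _))
      (mul_le_mul_of_nonneg_right h₂ (hφ _))

theorem eventually_mul_le {t : ℝ} (ht : t < 1) {X : Type*} [TopologicalSpace X] {f : X → ℝ}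
    {s : Set X} {x : X} (hf : ContinuousWithinAt f s x) (hs : ∀ y ∈ s, 0 ≤ f y) (hx : x ∈ s) :
    ∀ᶠ y in nhdsWithin x s, t * f x ≤ f y := by
  rcases (hs x hx).eq_or_lt with h | h
  · filter_upwards [self_mem_nhdsWithin] with y hy
    rw [← h, mul_zero]
    exact hs y hy
  · have : t * f x < f x := by nlinarith
    exact (hf.eventually (lt_mem_nhds this)).mono fun _ hy => le_of_lt hy

theorem continuousOn_ccrStar {φ : ℝ → ℝ} (hφ : ∀ α, 0 ≤ φ α) {S : Set ℝ} (hS : S.Nonempty) :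
    ContinuousOn (ccrStar φ S) (Set.Icc 0 1) := by
  intro η₀ hη₀
  refine tendsto_order.2 ⟨fun y hy => ?_, fun y hy => ?_⟩
  · have hlim : Filter.Tendsto (fun t : ℝ => t * ccrStar φ S η₀) (nhdsWithin 1 (Set.Iio 1))
        (nhds (ccrStar φ S η₀)) := by
      have : Continuous fun t : ℝ => t * ccrStar φ S η₀ := by fun_prop
      simpa using (this.tendsto 1).mono_left nhdsWithin_le_nhds
    have hpos : ∀ᶠ t : ℝ in nhdsWithin 1 (Set.Iio 1), 0 < t :=
      nhdsWithin_le_nhds (lt_mem_nhds one_pos)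
    obtain ⟨t, ⟨hyt, ht₀⟩, ht₁⟩ :=
      (((hlim.eventually (lt_mem_nhds hy)).and hpos).and self_mem_nhdsWithin).exists
    filter_upwards [eventually_mul_le (f := fun η : ℝ => η) ht₁ continuousWithinAt_id
        (fun _ h => h.1) hη₀,
      eventually_mul_le (f := fun η : ℝ => 1 - η) ht₁
        (continuousWithinAt_const.sub continuousWithinAt_id) (fun _ h => sub_nonneg.2 h.2) hη₀]
      with η h₁ h₂
    exact hyt.trans_le (mul_ccrStar_le hφ hS ht₀.le hη₀ h₁ h₂)
  · obtain ⟨_, ⟨α, hα, rfl⟩, hαy⟩ := exists_lt_of_csInf_lt (hS.image _) hy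
    have hcont : Continuous (ccr φ α) := by
      unfold ccr
      fun_prop
    filter_upwards [self_mem_nhdsWithin,
      nhdsWithin_le_nhds (hcont.continuousAt.eventually (gt_mem_nhds hαy))] with η hη hlt
    exact (ccrStar_le hφ hη hα).trans_lt hlt

/-- A pointwise gap between minimal risks is uniform over a compact set of class probabilities. -/
theorem exists_uniform_gap {φ : ℝ → ℝ} (hφ : ∀ α, 0 ≤ φ α) {S A K : Set ℝ} (hS : S.Nonempty)
    (hA : A.Nonempty) (hK : IsCompact K) (hK₁ : K ⊆ Set.Icc 0 1)
    (h : ∀ η ∈ K, ccrStar φ A η < ccrStar φ S η) :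
    ∃ δ > (0:ℝ), ∀ η ∈ K, ∀ α ∈ S, ccrStar φ A η + δ ≤ ccr φ α η := by
  obtain ⟨δ, hδ, hle⟩ := hK.exists_forall_le'
    (((continuousOn_ccrStar hφ hS).sub (continuousOn_ccrStar hφ hA)).mono hK₁)
    (a := 0) fun η hη => sub_pos.2 (h η hη)
  refine ⟨δ, hδ, fun η hη α hα => ?_⟩
  have h₁ : δ ≤ ccrStar φ S η - ccrStar φ A η := hle η hη
  linarith [ccrStar_le hφ (hK₁ hη) hα]

theorem robustLoss_nonneg (γ α : ℝ) : 0 ≤ robustLoss γ α := by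
  unfold robustLoss
  split_ifs <;> norm_num

theorem ccr_robustLoss_of_lt {γ α : ℝ} (hγ : 0 < γ) (hα : γ < α) (η : ℝ) :
    ccr (robustLoss γ) α η = 1 - η := by
  simp [ccr, robustLoss, hα.not_ge, show -α ≤ γ by linarith]

theorem ccr_robustLoss_of_lt_neg {γ α : ℝ} (hγ : 0 < γ) (hα : α < -γ) (η : ℝ) :
    ccr (robustLoss γ) α η = η := by
  simp [ccr, robustLoss, show α ≤ γ by linarith, show ¬ -α ≤ γ by linarith]

theorem ccr_robustLoss_of_abs_le {γ α : ℝ} (hα : |α| ≤ γ) (η : ℝ) :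
    ccr (robustLoss γ) α η = 1 := by
  obtain ⟨h₁, h₂⟩ := abs_le.1 hα
  simp [ccr, robustLoss, h₂, show -α ≤ γ by linarith]

theorem ccrStar_robustLoss {γ : ℝ} (hγ : γ ∈ Set.Ioo (0:ℝ) 1) {A : Set ℝ}
    (hA : Set.Icc (-1:ℝ) 1 ⊆ A) {η : ℝ} (hη : η ∈ Set.Icc (1/2 : ℝ) 1) :
    ccrStar (robustLoss γ) A η = 1 - η := by
  have hη' : η ∈ Set.Icc (0:ℝ) 1 := ⟨by linarith [hη.1], hη.2⟩
  have h1 : (1:ℝ) ∈ A := hA (by norm_num)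
  refine le_antisymm ?_ (le_ccrStar ⟨1, h1⟩ fun α _ => ?_)
  · rw [← ccr_robustLoss_of_lt hγ.1 hγ.2 η]
    exact ccrStar_le (robustLoss_nonneg γ) hη' h1
  · rcases lt_or_ge γ α with h | h
    · rw [ccr_robustLoss_of_lt hγ.1 h]
    · rcases lt_or_ge α (-γ) with h' | h'
      · rw [ccr_robustLoss_of_lt_neg hγ.1 h']
        linarith [hη.1]
      · rw [ccr_robustLoss_of_abs_le (abs_le.2 ⟨h', h⟩)]
        linarith [hη.1]

/-- For symmetric `A`, calibration only needs to be checked for `η ≥ 1/2`. -/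
theorem calibrated_of_half {φ ψ : ℝ → ℝ} {A : Set ℝ} (hsymm : ∀ α ∈ A, -α ∈ A)
    (h : ∀ ε > (0:ℝ), ∃ δ > (0:ℝ), ∀ η ∈ Set.Icc (1/2 : ℝ) 1, ∀ α ∈ A,
      ccr φ α η < ccrStar φ A η + δ → ccr ψ α η < ccrStar ψ A η + ε) :
    Calibrated φ ψ A := by
  intro ε hε
  obtain ⟨δ, hδ, H⟩ := h ε hε
  refine ⟨δ, hδ, fun η hη α hα hlt => ?_⟩
  rcases le_total (1/2) η with h | h
  · exact H η ⟨h, hη.2⟩ α hα hlt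
  · have := H (1 - η) ⟨by linarith, by linarith [hη.1]⟩ (-α) (hsymm α hα)
    simp only [ccr_neg, ccrStar_one_sub _ hsymm, sub_sub_cancel] at this
    exact this hlt

/-- Lemma (part 3): characterization of `(φ_γ, A)`-calibration for symmetric `A`
with `[-1,1] ⊆ A`. -/
theorem robust_calibration_characterization
    (γ : ℝ) (hγ : γ ∈ Set.Ioo (0:ℝ) 1)
    (φ : ℝ → ℝ) (hφ : ∀ α, 0 ≤ φ α)
    (A : Set ℝ) (hA : Set.Icc (-1:ℝ) 1 ⊆ A) (hsymm : ∀ α ∈ A, -α ∈ A) :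
    Calibrated φ (robustLoss γ) A ↔
      (sInf ((fun α => ccr φ α (1/2)) '' A)
          < sInf ((fun α => ccr φ α (1/2)) '' {α ∈ A | |α| ≤ γ}) ∧
       ∀ η : ℝ, 1/2 < η → η ≤ 1 →
         sInf ((fun α => ccr φ α η) '' A)
            < sInf ((fun α => ccr φ α η) '' {α ∈ A | α ≤ γ})) := by
  have h0 : (0:ℝ) ∈ A := hA (by norm_num)
  have hmid : {α ∈ A | |α| ≤ γ}.Nonempty := ⟨0, h0, by simpa using hγ.1.le⟩
  have hlow : {α ∈ A | α ≤ γ}.Nonempty := ⟨0, h0, hγ.1.le⟩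
  have hsub : {α ∈ A | |α| ≤ γ} ⊆ {α ∈ A | α ≤ γ} := fun α hα => ⟨hα.1, (abs_le.1 hα.2).2⟩
  change _ ↔ (ccrStar φ A (1/2) < ccrStar φ {α ∈ A | |α| ≤ γ} (1/2) ∧
    ∀ η : ℝ, 1/2 < η → η ≤ 1 → ccrStar φ A η < ccrStar φ {α ∈ A | α ≤ γ} η)
  constructor
  · intro hcal
    constructor
    · obtain ⟨δ, hδ, H⟩ := hcal (1/2) (by norm_num)
      refine (lt_add_of_pos_right _ hδ).trans_le (le_ccrStar hmid fun α hα => ?_)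
      by_contra! hlt
      have := H (1/2) (by norm_num) α hα.1 hlt
      rw [ccr_robustLoss_of_abs_le hα.2, ccrStar_robustLoss hγ hA (by norm_num)] at this
      norm_num at this
    · intro η hη hη1
      obtain ⟨δ, hδ, H⟩ := hcal (2 * η - 1) (by linarith)
      refine (lt_add_of_pos_right _ hδ).trans_le (le_ccrStar hlow fun α hα => ?_)
      by_contra! hlt
      have := H η ⟨by linarith, hη1⟩ α hα.1 hlt
      rw [ccrStar_robustLoss hγ hA ⟨hη.le, hη1⟩] at this
      rcases lt_or_ge α (-γ) with h | h
      · rw [ccr_robustLoss_of_lt_neg hγ.1 h] at this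
        linarith
      · rw [ccr_robustLoss_of_abs_le (abs_le.2 ⟨h, hα.2⟩)] at this
        linarith
  · rintro ⟨hhalf, hgt⟩
    refine calibrated_of_half hsymm fun ε hε => ?_
    obtain ⟨δ₁, hδ₁, H₁⟩ := exists_uniform_gap hφ (K := Set.Icc (1/2) 1) hmid ⟨0, h0⟩
      isCompact_Icc (Set.Icc_subset_Icc_left (by norm_num)) fun η hη => by
        rcases hη.1.eq_or_lt with rfl | h
        · exact hhalf
        · exact (hgt η h hη.2).trans_le (ccrStar_anti hφ hmid
            hsub ⟨by linarith, hη.2⟩)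
    obtain ⟨δ₂, hδ₂, H₂⟩ := exists_uniform_gap hφ (K := Set.Icc (1/2 + ε/2) 1) hlow ⟨0, h0⟩
      isCompact_Icc (Set.Icc_subset_Icc_left (by linarith)) fun η hη =>
        hgt η (by linarith [hη.1]) hη.2
    refine ⟨min δ₁ δ₂, lt_min hδ₁ hδ₂, fun η hη α hα hlt => ?_⟩
    rw [ccrStar_robustLoss hγ hA hη]
    rcases lt_or_ge γ α with h | h
    · rw [ccr_robustLoss_of_lt hγ.1 h]
      linarith
    · rcases lt_or_ge α (-γ) with h' | h'
      · rw [ccr_robustLoss_of_lt_neg hγ.1 h']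
        by_contra! hge
        linarith [H₂ η ⟨by linarith, hη.2⟩ α ⟨hα, h⟩, min_le_right δ₁ δ₂]
      · linarith [H₁ η hη α ⟨hα, abs_le.2 ⟨h', h⟩⟩, min_le_left δ₁ δ₂]
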